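/- Let (W¹,…,W^d) be a d-dimensional standard Brownian motion, V⁰ : [0,T] → (0,∞) continuous, and kᵢ ∈ L²_loc([0,∞)). Then the family Y^ε := (1/ε)(∫₀^T V⁰(t)(exp{ε Mᵗ − ε²⟨M⟩ᵗ/2} ) dt − ∫₀^T V⁰(t) dt), where Mᵗ = Σᵢ ∫₀^t kᵢ(t−s) dWⁱ_s (a Gaussian random variable with variance ⟨M⟩ᵗ = Σᵢ ∫₀^t kᵢ(s)² ds for each fixed t), is bounded in L²(P) uniformly over ε ∈ (0,1], and hence uniformly integrable. -/

import Mathlib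

open MeasureTheory ProbabilityTheory Real

/-!
Write `Wᵗ = exp (ε Mᵗ - ε² v(t) / 2)`. The Gaussian moment generating function gives `E[Wᵗ] = 1`
and `E[(Wᵗ - 1)²] = exp (ε² v(t)) - 1 ≤ ε² v(t) exp v(t)` for `|ε| ≤ 1`, so the factor `ε²` cancels
the square of the prefactor `1 / ε`. Integrating over `t` with the Cauchy–Schwarz inequality and
Fubini's theorem bounds the second moment of `Y^ε` independently of `ε`, and a bounded second moment
controls the tails of the first.
-/

open scoped NNReal

lemma exp_sub_one_le_mul_exp (x : ℝ) : exp x - 1 ≤ x * exp x := by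
  have h : (1 - x) * exp x ≤ exp (-x) * exp x := by
    gcongr
    exact one_sub_le_exp_neg x
  rw [← exp_add, neg_add_cancel, exp_zero] at h
  linarith

section SecondMoments

variable {Ω β : Type*} [MeasurableSpace Ω] [MeasurableSpace β] {μ : Measure Ω} {ν : Measure β}

lemma sq_integral_le_measureReal_univ_mul_integral_sq [IsFiniteMeasure ν] {f : β → ℝ}
    (hf : MemLp f 2 ν) : (∫ t, f t ∂ν) ^ 2 ≤ ν.real Set.univ * ∫ t, f t ^ 2 ∂ν := by
  rcases eq_or_ne ν 0 with rfl | hν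
  · simp
  have : NeZero ν := ⟨hν⟩
  have hm : 0 < ν.real Set.univ := measureReal_univ_pos
  have jensen : (⨍ t, f t ∂ν) ^ 2 ≤ ⨍ t, f t ^ 2 ∂ν :=
    even_two.convexOn_pow.map_average_le (continuous_pow 2).continuousOn isClosed_univ (by simp)
      (hf.integrable one_le_two) hf.integrable_sq
  rw [average_eq, average_eq, smul_eq_mul, smul_eq_mul, mul_pow, inv_pow,
    inv_mul_le_iff₀ (by positivity)] at jensen
  calc (∫ t, f t ∂ν) ^ 2
      ≤ ν.real Set.univ ^ 2 * ((ν.real Set.univ)⁻¹ * ∫ t, f t ^ 2 ∂ν) := jensen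
    _ = ν.real Set.univ * ∫ t, f t ^ 2 ∂ν := by field_simp

lemma memLp_two_prod_of_integral_sq_le [SFinite μ] {D : β × Ω → ℝ} {g : β → ℝ}
    (hD : AEStronglyMeasurable D (ν.prod μ)) (hg : Integrable g ν)
    (hmem : ∀ᵐ t ∂ν, MemLp (fun ω => D (t, ω)) 2 μ)
    (hle : ∀ᵐ t ∂ν, ∫ ω, D (t, ω) ^ 2 ∂μ ≤ g t) : MemLp D 2 (ν.prod μ) := by
  have hD2 : AEStronglyMeasurable (fun p => D p ^ 2) (ν.prod μ) := hD.pow 2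
  rw [memLp_two_iff_integrable_sq hD, integrable_prod_iff hD2]
  refine ⟨hmem.mono fun t ht => ht.integrable_sq,
    hg.mono' hD2.norm.integral_prod_right' (hle.mono fun t ht => ?_)⟩
  rw [norm_of_nonneg (integral_nonneg fun _ => norm_nonneg _)]
  simpa only [norm_pow, norm_eq_abs, sq_abs] using ht

section Marginal

variable [SFinite μ] [IsFiniteMeasure ν] {D : β × Ω → ℝ}

lemma ae_sq_integral_le_measureReal_univ_mul_integral_sq (hD : MemLp D 2 (ν.prod μ)) :
    ∀ᵐ ω ∂μ, (∫ t, D (t, ω) ∂ν) ^ 2 ≤ ν.real Set.univ * ∫ t, D (t, ω) ^ 2 ∂ν := by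
  filter_upwards [hD.aestronglyMeasurable.prod_swap.prodMk_left, hD.integrable_sq.prod_left_ae]
    with ω hmeas hsq
  exact sq_integral_le_measureReal_univ_mul_integral_sq ((memLp_two_iff_integrable_sq hmeas).2 hsq)

lemma memLp_two_integral_prod (hD : MemLp D 2 (ν.prod μ)) :
    MemLp (fun ω => ∫ t, D (t, ω) ∂ν) 2 μ := by
  have hmeas : AEStronglyMeasurable (fun ω => ∫ t, D (t, ω) ∂ν) μ :=
    hD.aestronglyMeasurable.prod_swap.integral_prod_right'
  refine (memLp_two_iff_integrable_sq hmeas).2 <|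
    (hD.integrable_sq.integral_prod_right.const_mul (ν.real Set.univ)).mono' (hmeas.pow 2) ?_
  filter_upwards [ae_sq_integral_le_measureReal_univ_mul_integral_sq hD] with ω hω
  rwa [norm_of_nonneg (sq_nonneg _)]

lemma integral_sq_integral_prod_le (hD : MemLp D 2 (ν.prod μ)) :
    ∫ ω, (∫ t, D (t, ω) ∂ν) ^ 2 ∂μ ≤ ν.real Set.univ * ∫ t, ∫ ω, D (t, ω) ^ 2 ∂μ ∂ν :=
  calc ∫ ω, (∫ t, D (t, ω) ∂ν) ^ 2 ∂μ
      ≤ ∫ ω, ν.real Set.univ * ∫ t, D (t, ω) ^ 2 ∂ν ∂μ :=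
        integral_mono_ae (memLp_two_integral_prod hD).integrable_sq
          (hD.integrable_sq.integral_prod_right.const_mul _)
          (ae_sq_integral_le_measureReal_univ_mul_integral_sq hD)
    _ = ν.real Set.univ * ∫ t, ∫ ω, D (t, ω) ^ 2 ∂μ ∂ν := by
        rw [integral_const_mul,
          integral_integral_swap (f := fun t ω => D (t, ω) ^ 2) hD.integrable_sq]

end Marginal

lemma setIntegral_abs_le_integral_sq_div {X : Ω → ℝ} (hX : MemLp X 2 μ) {K : ℝ} (hK : 0 < K) :
    ∫ ω in {ω | K ≤ |X ω|}, |X ω| ∂μ ≤ (∫ ω, X ω ^ 2 ∂μ) / K := by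
  have hint : Integrable (fun ω => X ω ^ 2 / K) μ := hX.integrable_sq.div_const K
  have hset : NullMeasurableSet {ω | K ≤ |X ω|} μ :=
    nullMeasurableSet_le aemeasurable_const hX.aestronglyMeasurable.aemeasurable.abs
  calc ∫ ω in {ω | K ≤ |X ω|}, |X ω| ∂μ
      ≤ ∫ ω in {ω | K ≤ |X ω|}, X ω ^ 2 / K ∂μ := by
        refine integral_mono_of_nonneg (.of_forall fun ω => abs_nonneg _) hint.integrableOn ?_
        refine (ae_restrict_iff'₀ hset).2 (.of_forall fun ω (hω : K ≤ |X ω|) => ?_)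
        rw [le_div_iff₀ hK, ← sq_abs, sq]
        gcongr
    _ ≤ ∫ ω, X ω ^ 2 / K ∂μ :=
        setIntegral_le_integral hint (.of_forall fun ω => by positivity)
    _ = (∫ ω, X ω ^ 2 ∂μ) / K := integral_div K _

lemma exists_forall_setIntegral_abs_le_of_integral_sq_le {ι : Type*} {X : ι → Ω → ℝ} {s : Set ι}
    {C : ℝ} (hX : ∀ i ∈ s, MemLp (X i) 2 μ) (hC : ∀ i ∈ s, ∫ ω, X i ω ^ 2 ∂μ ≤ C)
    {δ : ℝ} (hδ : 0 < δ) :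
    ∃ K, ∀ i ∈ s, ∫ ω in {ω | K ≤ |X i ω|}, |X i ω| ∂μ ≤ δ := by
  have hK : 0 < max 1 (C / δ) := lt_max_of_lt_left one_pos
  refine ⟨max 1 (C / δ), fun i hi => (setIntegral_abs_le_integral_sq_div (hX i hi) hK).trans ?_⟩
  rw [div_le_iff₀ hK]
  calc ∫ ω, X i ω ^ 2 ∂μ ≤ C := hC i hi
    _ = δ * (C / δ) := by field_simp
    _ ≤ δ * max 1 (C / δ) := by gcongr; exact le_max_right _ _

end SecondMoments

/-- The Wick exponential of `ε X` evaluated at `X = x`, where `X` is a centered Gaussian random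
variable of variance `v`: the exponential `exp (ε X)` divided by its mean. -/
noncomputable def wickExp (v : ℝ≥0) (ε x : ℝ) : ℝ := exp (ε * x - ε ^ 2 * v / 2)

section WickExp

variable {Ω : Type*} [MeasurableSpace Ω] {μ : Measure Ω} {v : ℝ≥0} {X : Ω → ℝ}

lemma wickExp_eq_mul_exp (v : ℝ≥0) (ε x : ℝ) :
    wickExp v ε x = exp (-(v * ε ^ 2 / 2)) * exp (ε * x) := by
  rw [wickExp, ← exp_add]
  ring_nf

lemma wickExp_sq (v : ℝ≥0) (ε x : ℝ) :
    wickExp v ε x ^ 2 = exp (ε ^ 2 * v) * wickExp v (2 * ε) x := by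
  rw [wickExp, wickExp, ← exp_nat_mul, ← exp_add]
  ring_nf

lemma integrable_wickExp (hX : HasLaw X (gaussianReal 0 v) μ) (ε : ℝ) :
    Integrable (fun ω => wickExp v ε (X ω)) μ := by
  simp only [wickExp_eq_mul_exp]
  have h := integrable_exp_mul_gaussianReal (μ := 0) (v := v) ε
  rw [← hX.map_eq] at h
  exact (h.comp_aemeasurable hX.aemeasurable).const_mul _

lemma integral_wickExp (hX : HasLaw X (gaussianReal 0 v) μ) (ε : ℝ) :
    ∫ ω, wickExp v ε (X ω) ∂μ = 1 := by
  have hmgf : ∫ ω, exp (ε * X ω) ∂μ = exp (v * ε ^ 2 / 2) := by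
    simpa only [mgf, zero_mul, zero_add] using mgf_gaussianReal hX.map_eq ε
  simp only [wickExp_eq_mul_exp]
  rw [integral_const_mul, hmgf, ← exp_add, neg_add_cancel, exp_zero]

lemma integral_wickExp_sq (hX : HasLaw X (gaussianReal 0 v) μ) (ε : ℝ) :
    ∫ ω, wickExp v ε (X ω) ^ 2 ∂μ = exp (ε ^ 2 * v) := by
  simp only [wickExp_sq, integral_const_mul, integral_wickExp hX, mul_one]

lemma memLp_two_wickExp (hX : HasLaw X (gaussianReal 0 v) μ) (ε : ℝ) :
    MemLp (fun ω => wickExp v ε (X ω)) 2 μ := by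
  rw [memLp_two_iff_integrable_sq (integrable_wickExp hX ε).aestronglyMeasurable]
  simp only [wickExp_sq]
  exact (integrable_wickExp hX (2 * ε)).const_mul _

lemma integral_wickExp_sub_one_sq (hX : HasLaw X (gaussianReal 0 v) μ) (ε : ℝ) :
    ∫ ω, (wickExp v ε (X ω) - 1) ^ 2 ∂μ = exp (ε ^ 2 * v) - 1 := by
  have := hX.isProbabilityMeasure
  rw [← integral_wickExp hX ε,
    ← variance_eq_integral (integrable_wickExp hX ε).aestronglyMeasurable.aemeasurable,
    variance_eq_sub (memLp_two_wickExp hX ε), integral_wickExp hX ε]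
  simp only [Pi.pow_apply, integral_wickExp_sq hX ε, one_pow]

lemma integral_wickExp_sub_one_sq_le (hX : HasLaw X (gaussianReal 0 v) μ) {ε : ℝ} (hε : |ε| ≤ 1) :
    ∫ ω, (wickExp v ε (X ω) - 1) ^ 2 ∂μ ≤ ε ^ 2 * (v * exp v) := by
  have hεv : ε ^ 2 * v ≤ v := mul_le_of_le_one_left v.coe_nonneg ((sq_le_one_iff_abs_le_one ε).2 hε)
  calc ∫ ω, (wickExp v ε (X ω) - 1) ^ 2 ∂μ
      = exp (ε ^ 2 * v) - 1 := integral_wickExp_sub_one_sq hX ε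
    _ ≤ ε ^ 2 * v * exp (ε ^ 2 * v) := exp_sub_one_le_mul_exp _
    _ ≤ ε ^ 2 * v * exp v := by gcongr
    _ = ε ^ 2 * (v * exp v) := mul_assoc _ _ _

lemma integral_mul_wickExp_sub_one_sq_le (hX : HasLaw X (gaussianReal 0 v) μ) {ε : ℝ}
    (hε : |ε| ≤ 1) (a : ℝ) :
    ∫ ω, (a * (wickExp v ε (X ω) - 1)) ^ 2 ∂μ ≤ ε ^ 2 * (a ^ 2 * (v * exp v)) := by
  simp only [mul_pow, integral_const_mul]
  calc a ^ 2 * ∫ ω, (wickExp v ε (X ω) - 1) ^ 2 ∂μ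
      ≤ a ^ 2 * (ε ^ 2 * (v * exp v)) := by gcongr; exact integral_wickExp_sub_one_sq_le hX hε
    _ = ε ^ 2 * (a ^ 2 * (v * exp v)) := mul_left_comm _ _ _

end WickExp

section WickPerturbation

variable {Ω β : Type*} [MeasurableSpace Ω] [MeasurableSpace β] {μ : Measure Ω} {ν : Measure β}
  {V : β → ℝ} {v : β → ℝ≥0} {M : β → Ω → ℝ} {ε : ℝ}

/-- Almost every random variable `M t` is centered Gaussian with variance `v t`, and `M` and `v` are
measurable enough for `M` to be integrated over `t` against `ν` and over `ω` against `μ`. Nothing is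
said about the joint law of `M s` and `M t`. -/
structure HasCenteredGaussianMarginals (M : β → Ω → ℝ) (v : β → ℝ≥0) (ν : Measure β)
    (μ : Measure Ω) : Prop where
  aemeasurable : AEMeasurable (Function.uncurry M) (ν.prod μ)
  aemeasurable_variance : AEMeasurable v ν
  hasLaw : ∀ᵐ t ∂ν, HasLaw (M t) (gaussianReal 0 (v t)) μ

lemma memLp_two_mul_wickExp_sub_one [IsFiniteMeasure μ] [SFinite ν]
    (hV : AEStronglyMeasurable V ν)
    (hVv : Integrable (fun t => V t ^ 2 * (v t * exp (v t))) ν)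
    (hM : HasCenteredGaussianMarginals M v ν μ) (hε : |ε| ≤ 1) :
    MemLp (fun p : β × Ω => V p.1 * (wickExp (v p.1) ε (M p.1 p.2) - 1)) 2 (ν.prod μ) := by
  have hmeas : AEMeasurable (fun p : β × Ω => wickExp (v p.1) ε (M p.1 p.2)) (ν.prod μ) :=
    measurable_exp.comp_aemeasurable <| (hM.aemeasurable.const_mul ε).sub <|
      (hM.aemeasurable_variance.coe_nnreal_real.comp_fst.const_mul (ε ^ 2)).div_const 2
  refine memLp_two_prod_of_integral_sq_le
    (hV.comp_fst.mul (hmeas.sub aemeasurable_const).aestronglyMeasurable)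
    (hVv.const_mul (ε ^ 2)) ?_ ?_
  · filter_upwards [hM.hasLaw] with t ht
    exact ((memLp_two_wickExp ht ε).sub (memLp_const 1)).const_mul (V t)
  · filter_upwards [hM.hasLaw] with t ht
    exact integral_mul_wickExp_sub_one_sq_le ht hε (V t)

/-- The random variable `Y^ε`: the difference quotient at `0`, with step `ε`, of the integral of the
weight `V` against the Wick exponentials of the Gaussian field `M` with variance function `v`. The
time interval with Lebesgue measure is replaced by an arbitrary measure space `(β, ν)`. -/
noncomputable def wickPerturbation (ν : Measure β) (V : β → ℝ) (v : β → ℝ≥0) (M : β → Ω → ℝ)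
    (ε : ℝ) (ω : Ω) : ℝ :=
  1 / ε * ((∫ t, V t * wickExp (v t) ε (M t ω) ∂ν) - ∫ t, V t ∂ν)

variable [IsFiniteMeasure μ] [IsFiniteMeasure ν]

lemma wickPerturbation_ae_eq (hV : Integrable V ν)
    (hVv : Integrable (fun t => V t ^ 2 * (v t * exp (v t))) ν)
    (hM : HasCenteredGaussianMarginals M v ν μ) (hε : |ε| ≤ 1) :
    wickPerturbation ν V v M ε =ᵐ[μ]
      fun ω => 1 / ε * ∫ t, V t * (wickExp (v t) ε (M t ω) - 1) ∂ν := by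
  have hD := memLp_two_mul_wickExp_sub_one hV.aestronglyMeasurable hVv hM hε
  filter_upwards [(hD.integrable one_le_two).prod_left_ae] with ω hω
  have hW : Integrable (fun t => V t * wickExp (v t) ε (M t ω)) ν := by
    refine (hω.add hV).congr (.of_forall fun t => ?_)
    simp only [Pi.add_apply]
    ring
  simp only [wickPerturbation, mul_sub, mul_one, integral_sub hW hV]

lemma memLp_two_wickPerturbation (hV : Integrable V ν)
    (hVv : Integrable (fun t => V t ^ 2 * (v t * exp (v t))) ν)
    (hM : HasCenteredGaussianMarginals M v ν μ) (hε : |ε| ≤ 1) :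
    MemLp (wickPerturbation ν V v M ε) 2 μ :=
  have hD := memLp_two_mul_wickExp_sub_one hV.aestronglyMeasurable hVv hM hε
  ((memLp_two_integral_prod hD).const_mul (1 / ε)).ae_eq
    (wickPerturbation_ae_eq hV hVv hM hε).symm

lemma integral_sq_wickPerturbation_le (hV : Integrable V ν)
    (hVv : Integrable (fun t => V t ^ 2 * (v t * exp (v t))) ν)
    (hM : HasCenteredGaussianMarginals M v ν μ) (hε₀ : ε ≠ 0) (hε : |ε| ≤ 1) :
    ∫ ω, wickPerturbation ν V v M ε ω ^ 2 ∂μ ≤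
      ν.real Set.univ * ∫ t, V t ^ 2 * (v t * exp (v t)) ∂ν := by
  have hD := memLp_two_mul_wickExp_sub_one hV.aestronglyMeasurable hVv hM hε
  calc ∫ ω, wickPerturbation ν V v M ε ω ^ 2 ∂μ
      = (1 / ε) ^ 2 * ∫ ω, (∫ t, V t * (wickExp (v t) ε (M t ω) - 1) ∂ν) ^ 2 ∂μ := by
        rw [← integral_const_mul]
        refine integral_congr_ae ((wickPerturbation_ae_eq hV hVv hM hε).mono fun ω hω => ?_)
        simp only [hω, mul_pow]
    _ ≤ (1 / ε) ^ 2 * (ν.real Set.univ *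
          ∫ t, ∫ ω, (V t * (wickExp (v t) ε (M t ω) - 1)) ^ 2 ∂μ ∂ν) := by
        gcongr
        exact integral_sq_integral_prod_le hD
    _ ≤ (1 / ε) ^ 2 * (ν.real Set.univ * ∫ t, ε ^ 2 * (V t ^ 2 * (v t * exp (v t))) ∂ν) := by
        gcongr ?_ * (?_ * ?_)
        exact integral_mono_ae hD.integrable_sq.integral_prod_left (hVv.const_mul _)
          (hM.hasLaw.mono fun t ht => integral_mul_wickExp_sub_one_sq_le ht hε (V t))
    _ = ν.real Set.univ * ∫ t, V t ^ 2 * (v t * exp (v t)) ∂ν := by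
        rw [integral_const_mul]
        field_simp

end WickPerturbation

section Variance

lemma monotone_setIntegral_Ioc {α : Type*} [Preorder α] [MeasurableSpace α] {μ : Measure α}
    {f : α → ℝ} {a : α} (hf₀ : 0 ≤ f) (hf : ∀ b, IntegrableOn f (Set.Ioc a b) μ) :
    Monotone fun b => ∫ s in Set.Ioc a b, f s ∂μ :=
  fun _ c hbc => setIntegral_mono_set (hf c) (.of_forall hf₀)
    (Set.Ioc_subset_Ioc_right hbc).eventuallyLE

lemma monotone_sum_setIntegral_Ioc_sq {ι : Type*} [Fintype ι] {k : ι → ℝ → ℝ}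
    (hk : ∀ i, ∀ R > (0 : ℝ), IntegrableOn (fun s => k i s ^ 2) (Set.Icc 0 R)) :
    Monotone fun t => ∑ i, ∫ s in Set.Ioc 0 t, k i s ^ 2 := by
  refine fun a b hab => Finset.sum_le_sum fun i _ =>
    monotone_setIntegral_Ioc (fun s => sq_nonneg (k i s)) (fun t => ?_) hab
  exact (hk i (max 1 t) (lt_max_of_lt_left one_pos)).mono_set <|
    Set.Ioc_subset_Icc_self.trans (Set.Icc_subset_Icc_right (le_max_right 1 t))

lemma integrableOn_sq_mul_mul_exp {V : ℝ → ℝ} {v : ℝ → ℝ≥0} {a b : ℝ}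
    (hV : ContinuousOn V (Set.Icc a b)) (hv : MonotoneOn v (Set.Icc a b)) :
    IntegrableOn (fun t => V t ^ 2 * (v t * exp (v t))) (Set.Icc a b) := by
  have hmono : MonotoneOn (fun t => (v t : ℝ) * exp (v t)) (Set.Icc a b) := fun s hs t ht hst => by
    have : v s ≤ v t := hv hs ht hst
    dsimp only
    gcongr
  exact (hmono.integrableOn_isCompact isCompact_Icc).continuousOn_mul (hV.pow 2) isCompact_Icc

end Variance

theorem stmt13_general {Ω β : Type*} [MeasurableSpace Ω] [MeasurableSpace β]
    {μ : Measure Ω} [IsFiniteMeasure μ] {ν : Measure β} [IsFiniteMeasure ν]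
    {V : β → ℝ} (hV : Integrable V ν) {v : β → ℝ≥0}
    (hVv : Integrable (fun t => V t ^ 2 * (v t * exp (v t))) ν)
    {M : β → Ω → ℝ} (hM : HasCenteredGaussianMarginals M v ν μ) :
    (∃ C : ℝ, ∀ ε ∈ Set.Ioc (0 : ℝ) 1, ∫ ω, wickPerturbation ν V v M ε ω ^ 2 ∂μ ≤ C) ∧
      ∀ δ > (0 : ℝ), ∃ K : ℝ, ∀ ε ∈ Set.Ioc (0 : ℝ) 1,
        ∫ ω in {ω | K ≤ |wickPerturbation ν V v M ε ω|}, |wickPerturbation ν V v M ε ω| ∂μ ≤ δ := by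
  have habs : ∀ ε ∈ Set.Ioc (0 : ℝ) 1, |ε| ≤ 1 := fun ε hε => (abs_of_pos hε.1).trans_le hε.2
  have hbound : ∀ ε ∈ Set.Ioc (0 : ℝ) 1, ∫ ω, wickPerturbation ν V v M ε ω ^ 2 ∂μ ≤
      ν.real Set.univ * ∫ t, V t ^ 2 * (v t * exp (v t)) ∂ν := fun ε hε =>
    integral_sq_wickPerturbation_le hV hVv hM hε.1.ne' (habs ε hε)
  exact ⟨⟨_, hbound⟩, fun δ hδ => exists_forall_setIntegral_abs_le_of_integral_sq_le
    (fun ε hε => memLp_two_wickPerturbation hV hVv hM (habs ε hε)) hbound hδ⟩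

/-- For the Bergomi-type perturbation, where for each `t` the random
variable `Mᵗ = Σᵢ ∫₀^t kᵢ(t−s)dWⁱ_s` is centered Gaussian with variance
`σ²(t) = Σᵢ ∫₀^t kᵢ(s)² ds`, the family
`Y^ε = (1/ε)(∫₀^T V⁰(t) exp{εMᵗ − ε²σ²(t)/2} dt − ∫₀^T V⁰(t) dt)` is bounded in `L²(P)`
uniformly over `ε ∈ (0,1]`, and hence uniformly integrable. -/
theorem stmt13 {Ω : Type*} [MeasurableSpace Ω] (μ : Measure Ω) [IsProbabilityMeasure μ]
    (d : ℕ) (T : ℝ) (hT : 0 < T)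
    (V0 : ℝ → ℝ) (hV0cont : ContinuousOn V0 (Set.Icc 0 T))
    (hV0pos : ∀ t ∈ Set.Icc 0 T, 0 < V0 t)
    (k : Fin d → ℝ → ℝ)
    (hk : ∀ i, ∀ R > (0 : ℝ), IntegrableOn (fun s => (k i s) ^ 2) (Set.Icc 0 R))
    (M : ℝ → Ω → ℝ) (hM : Measurable (Function.uncurry M))
    (σ2 : ℝ → ℝ) (hσ2 : ∀ t, σ2 t = ∑ i, ∫ s in Set.Ioc 0 t, (k i s) ^ 2)
    (hlaw : ∀ t ∈ Set.Icc 0 T, μ.map (M t) = gaussianReal 0 (σ2 t).toNNReal)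
    (Y : ℝ → Ω → ℝ)
    (hY : ∀ ε ω, Y ε ω = (1 / ε) *
      ((∫ t in Set.Ioc 0 T, V0 t * exp (ε * M t ω - ε ^ 2 * σ2 t / 2)) -
        ∫ t in Set.Ioc 0 T, V0 t)) :
    (∃ C : ℝ, ∀ ε ∈ Set.Ioc (0 : ℝ) 1, ∫ ω, (Y ε ω) ^ 2 ∂μ ≤ C) ∧
      ∀ δ > (0 : ℝ), ∃ K : ℝ, ∀ ε ∈ Set.Ioc (0 : ℝ) 1,
        ∫ ω in {ω | K ≤ |Y ε ω|}, |Y ε ω| ∂μ ≤ δ := by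
  have hv : Monotone fun t => (σ2 t).toNNReal := by
    obtain rfl : σ2 = _ := funext hσ2
    exact fun s t hst => toNNReal_le_toNNReal (monotone_sum_setIntegral_Ioc_sq hk hst)
  have hσ2_nonneg (t : ℝ) : 0 ≤ σ2 t := by
    rw [hσ2]
    exact Finset.sum_nonneg fun i _ => integral_nonneg fun s => sq_nonneg _
  obtain rfl : Y = wickPerturbation (volume.restrict (Set.Ioc 0 T)) V0
      (fun t => (σ2 t).toNNReal) M := by
    ext ε ω
    simp only [hY, wickPerturbation, wickExp, coe_toNNReal _ (hσ2_nonneg _)]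
  have hMv : HasCenteredGaussianMarginals M (fun t => (σ2 t).toNNReal)
      (volume.restrict (Set.Ioc 0 T)) μ :=
    ⟨hM.aemeasurable, hv.measurable.aemeasurable, ae_restrict_of_forall_mem measurableSet_Ioc
      fun t ht => ⟨hM.of_uncurry_left.aemeasurable, hlaw t (Set.Ioc_subset_Icc_self ht)⟩⟩
  exact stmt13_general (hV0cont.integrableOn_Icc.mono_set Set.Ioc_subset_Icc_self)
    ((integrableOn_sq_mul_mul_exp hV0cont (hv.monotoneOn _)).mono_set Set.Ioc_subset_Icc_self) hMv
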